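/- arXiv:math/0112017 — 2 statements merged into one kernel-verified Lean document; each statement's English description precedes it below -/
import Mathlib

section
/- Let ρ be a C_0^∞ function supported in (-π,π) with ρ(0)=1, and let ψ_{p,θ}(x) = (1/θ)ρ(x/θ)D_p(x/θ) be the associated two-parameter spectral mollifier. Then for every integer s ≥ 0 there exists a constant C_s (of the form C_s = Const·‖(θy)^s ρ(y)‖_{C^s}) such that the s-th moment of ψ_{p,θ} satisfies ∫_{-πθ}^{πθ} y^s ψ_{p,θ}(y) dy = δ_{s0} + O(C_s · p^{-(s-1)}), i.e. the mass is 1 up to O(p^{-(s-1)}) for s=0 and all higher moments are of size O(p^{-(s-1)}). -/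
open MeasureTheory Real

noncomputable section

/-- Dirichlet kernel of degree `p`: `D_p(x) = (1/2π) ∑_{|k| ≤ p} e^{ikx}`. -/
def dirichletKer (p : ℕ) (x : ℝ) : ℝ :=
  (1 / (2 * π)) * ∑ k ∈ Finset.Icc (-(p : ℤ)) (p : ℤ), Real.cos (k * x)

/-- Fourier coefficient `f̂_k` of a 2π-periodic function. -/
def fourierCoefOn (f : ℝ → ℂ) (k : ℤ) : ℂ :=
  (1 / (2 * π)) * ∫ y in (-π)..π, f y * Complex.exp (-(Complex.I * k * y))

/-- `N`-th Fourier partial sum `S_N f`. -/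
def SN (N : ℕ) (f : ℝ → ℂ) (x : ℝ) : ℂ :=
  ∑ k ∈ Finset.Icc (-(N : ℤ)) (N : ℤ), fourierCoefOn f k * Complex.exp (Complex.I * k * x)

/-- The two-parameter spectral mollifier `ψ_{p,θ}(x) = (1/θ) ρ(x/θ) D_p(x/θ)`. -/
def specMollifier (ρ : ℝ → ℝ) (p : ℕ) (θ : ℝ) (x : ℝ) : ℝ :=
  (1 / θ) * ρ (x / θ) * dirichletKer p (x / θ)

/-- `‖g‖_{C^s}`: the sup norm of the `s`-th derivative of `g`. -/
def CsNorm (s : ℕ) (g : ℝ → ℝ) : ℝ := ⨆ x : ℝ, |iteratedDeriv s g x|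

/-- Vanishing outside the open interval passes to the derivative. -/
lemma deriv_vanish {f : ℝ → ℝ} (hf : ContDiff ℝ (⊤ : ℕ∞) f)
    (h0 : ∀ x, x ∉ Set.Ioo (-π) π → f x = 0) :
    ∀ x, x ∉ Set.Ioo (-π) π → deriv f x = 0 := by
  intro x hx
  have hd : DifferentiableAt ℝ f x := (hf.differentiable (by simp)).differentiableAt
  by_cases hxp : π ≤ x
  · rw [← hd.derivWithin (uniqueDiffOn_Ici x x Set.self_mem_Ici)]
    have : derivWithin f (Set.Ici x) x = derivWithin (fun _ => (0 : ℝ)) (Set.Ici x) x := by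
      apply derivWithin_congr
      · intro y hy
        exact h0 y (fun h => absurd h.2 (not_lt.mpr (hxp.trans hy)))
      · exact h0 x hx
    rw [this]; simp
  · have hxm : x ≤ -π := by
      by_contra h
      exact hx ⟨not_le.mp h, not_le.mp hxp⟩
    rw [← hd.derivWithin (uniqueDiffOn_Iic x x Set.self_mem_Iic)]
    have : derivWithin f (Set.Iic x) x = derivWithin (fun _ => (0 : ℝ)) (Set.Iic x) x := by
      apply derivWithin_congr
      · intro y hy
        exact h0 y (fun h => absurd h.1 (not_lt.mpr (le_trans hy hxm)))
      · exact h0 x hx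
    rw [this]; simp

lemma contDiff_deriv_top {f : ℝ → ℝ} (hf : ContDiff ℝ (⊤ : ℕ∞) f) :
    ContDiff ℝ (⊤ : ℕ∞) (deriv f) := by
  have := (contDiff_infty_iff_deriv (𝕜 := ℝ) (f := f)).1 hf
  exact this.2

lemma bdd_vanish {f : ℝ → ℝ} (hf : Continuous f)
    (h0 : ∀ x, x ∉ Set.Ioo (-π) π → f x = 0) : ∃ M, ∀ x, |f x| ≤ M := by
  obtain ⟨C, hC⟩ := (isCompact_Icc (a := -π) (b := π)).exists_bound_of_continuousOn hf.continuousOn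
  refine ⟨max C 0, fun x => ?_⟩
  by_cases hx : x ∈ Set.Ioo (-π) π
  · exact le_max_of_le_left (hC x (Set.Ioo_subset_Icc_self hx))
  · rw [h0 x hx]; simp

lemma iter_vanish (s : ℕ) : ∀ {f : ℝ → ℝ}, ContDiff ℝ (⊤ : ℕ∞) f →
    (∀ x, x ∉ Set.Ioo (-π) π → f x = 0) →
    ContDiff ℝ (⊤ : ℕ∞) (iteratedDeriv s f) ∧
      ∀ x, x ∉ Set.Ioo (-π) π → iteratedDeriv s f x = 0 := by
  induction s with
  | zero => intro f hf h0; rw [iteratedDeriv_zero]; exact ⟨hf, h0⟩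
  | succ n ih =>
    intro f hf h0
    rw [iteratedDeriv_succ']
    exact ih (contDiff_deriv_top hf) (deriv_vanish hf h0)

lemma le_CsNorm (s : ℕ) {f : ℝ → ℝ} (hf : ContDiff ℝ (⊤ : ℕ∞) f)
    (h0 : ∀ x, x ∉ Set.Ioo (-π) π → f x = 0) (x : ℝ) :
    |iteratedDeriv s f x| ≤ CsNorm s f := by
  obtain ⟨h1, h2⟩ := iter_vanish s hf h0
  obtain ⟨M, hM⟩ := bdd_vanish h1.continuous h2
  exact le_ciSup (f := fun x => |iteratedDeriv s f x|)
    ⟨M, by rintro _ ⟨y, rfl⟩; exact hM y⟩ x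

/-- Repeated integration by parts. -/
lemma cos_coef_bound (s : ℕ) (k : ℝ) (hk : 0 < k) : ∀ (f : ℝ → ℝ) (M c : ℝ),
    ContDiff ℝ (⊤ : ℕ∞) f → (∀ x, x ∉ Set.Ioo (-π) π → f x = 0) →
    (∀ x, |iteratedDeriv s f x| ≤ M) →
    |∫ y in (-π)..π, f y * Real.cos (k * y + c)| ≤ 2 * π * M / k ^ s := by
  induction s with
  | zero =>
    intro f M c hf h0 hM
    have := intervalIntegral.norm_integral_le_of_norm_le_const (a := -π) (b := π) (C := M)
      (f := fun y => f y * Real.cos (k * y + c)) (by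
        intro x _
        rw [norm_mul]
        have h1 := hM x
        rw [iteratedDeriv_zero] at h1
        have h2 := Real.abs_cos_le_one (k * x + c)
        simp only [Real.norm_eq_abs]
        nlinarith [abs_nonneg (f x), abs_nonneg (Real.cos (k * x + c))])
    rw [Real.norm_eq_abs] at this
    rw [show |π - -π| = 2 * π by rw [abs_of_pos] <;> linarith [Real.pi_pos]] at this
    simp only [pow_zero, div_one]
    linarith
  | succ n ih =>
    intro f M c hf h0 hM
    have hM' : ∀ x, |iteratedDeriv n (deriv f) x| ≤ M := by
      intro x; rw [← iteratedDeriv_succ']; exact hM x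
    have h1 := ih (deriv f) M (c - π / 2) (contDiff_deriv_top hf) (deriv_vanish hf h0) hM'
    have hp := intervalIntegral.integral_mul_deriv_eq_deriv_mul (a := -π) (b := π)
      (u := f) (v := fun y => Real.sin (k * y + c) / k) (u' := deriv f)
      (v' := fun y => Real.cos (k * y + c))
      (fun x _ => ((hf.differentiable (by simp)) x).hasDerivAt)
      (fun x _ => by
        have h := (((hasDerivAt_id' x).const_mul k).add_const c).sin.div_const k
        convert h using 1
        field_simp)
      ((contDiff_deriv_top hf).continuous.intervalIntegrable _ _)
      ((by fun_prop : Continuous fun y => Real.cos (k * y + c)).intervalIntegrable _ _)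
    rw [hp, h0 π (by simp), h0 (-π) (by simp)]
    have he : (∫ x in (-π)..π, deriv f x * (Real.sin (k * x + c) / k)) =
        (∫ x in (-π)..π, deriv f x * Real.cos (k * x + (c - π / 2))) / k := by
      rw [← intervalIntegral.integral_div]
      congr 1; ext x
      rw [← add_sub_assoc, Real.cos_sub_pi_div_two]; ring
    rw [he, zero_mul, zero_mul, sub_zero, zero_sub, abs_neg, abs_div, abs_of_pos hk, pow_succ,
      ← div_div]
    gcongr

lemma dk_succ (p : ℕ) (x : ℝ) :
    dirichletKer (p + 1) x = dirichletKer p x + (1 / π) * Real.cos ((p + 1 : ℝ) * x) := by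
  unfold dirichletKer
  have : Finset.Icc (-((p + 1 : ℕ) : ℤ)) ((p + 1 : ℕ) : ℤ) =
      insert (-((p : ℤ) + 1)) (insert ((p : ℤ) + 1) (Finset.Icc (-(p : ℤ)) (p : ℤ))) := by
    ext a; simp only [Finset.mem_Icc, Finset.mem_insert]; push_cast; omega
  rw [this, Finset.sum_insert (by simp only [Finset.mem_Icc, Finset.mem_insert]; omega),
    Finset.sum_insert (by simp only [Finset.mem_Icc]; omega)]
  push_cast
  rw [neg_mul, Real.cos_neg]
  have := Real.pi_pos.ne'
  field_simp
  ring

lemma dk_zero (x : ℝ) : dirichletKer 0 x = 1 / (2 * π) := by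
  simp [dirichletKer]

lemma dk_cont (p : ℕ) : Continuous (dirichletKer p) := by
  unfold dirichletKer; fun_prop

lemma dk_abs (p : ℕ) (x : ℝ) : |dirichletKer p x| ≤ (2 * p + 1) / (2 * π) := by
  have hpi := Real.pi_pos
  induction p with
  | zero => rw [dk_zero, abs_of_pos (by positivity)]; simp
  | succ n ih =>
    rw [dk_succ]
    have h := abs_add_le (dirichletKer n x) ((1 / π) * Real.cos ((n + 1 : ℝ) * x))
    have h2 : |(1 / π) * Real.cos ((n + 1 : ℝ) * x)| ≤ 1 / π := by
      rw [abs_mul, abs_of_pos (by positivity : 0 < 1 / π)]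
      exact mul_le_of_le_one_right (by positivity) (Real.abs_cos_le_one _)
    have h3 : ((2 * ((n + 1 : ℕ) : ℝ) + 1) / (2 * π)) = (2 * n + 1) / (2 * π) + 1 / π := by
      push_cast; field_simp; ring
    rw [h3]; linarith

lemma dk_sin (p : ℕ) (x : ℝ) :
    dirichletKer p x * (2 * π * Real.sin (x / 2)) = Real.sin ((p + 1 / 2 : ℝ) * x) := by
  have hpi := Real.pi_pos.ne'
  induction p with
  | zero =>
    rw [dk_zero]; field_simp; congr 1; push_cast; ring
  | succ n ih =>
    rw [dk_succ, add_mul, ih]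
    have h1 : ((n + 1 / 2 : ℝ) * x) = (n + 1) * x - x / 2 := by ring
    have h2 : ((((n + 1 : ℕ) : ℝ) + 1 / 2 : ℝ) * x) = (n + 1) * x + x / 2 := by push_cast; ring
    rw [h1, h2, Real.sin_sub, Real.sin_add]
    field_simp
    ring

lemma sin_half_lower {y : ℝ} (hy : y ∈ Set.Icc (-π) π) : |y| ≤ π * |Real.sin (y / 2)| := by
  have hpi := Real.pi_pos
  have key : ∀ z, 0 ≤ z → z ≤ π → z ≤ π * Real.sin (z / 2) := by
    intro z h0 h1
    have := Real.mul_le_sin (x := z / 2) (by linarith) (by linarith)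
    calc z = π * (2 / π * (z / 2)) := by field_simp
      _ ≤ _ := by gcongr
  rcases le_total 0 y with h | h
  · rw [abs_of_nonneg h]
    exact (key y h hy.2).trans (by gcongr; exact le_abs_self _)
  · rw [abs_of_nonpos h]
    refine (key (-y) (by linarith) (by linarith [hy.1])).trans ?_
    gcongr
    rw [neg_div, Real.sin_neg]; exact neg_le_abs _

lemma lin_bound {g : ℝ → ℝ} {M : ℝ} (hg : ContDiff ℝ (⊤ : ℕ∞) g) (hz : g 0 = 0)
    (hM : ∀ x, |deriv g x| ≤ M) (y : ℝ) : |g y| ≤ M * |y| := by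
  have := Convex.norm_image_sub_le_of_norm_deriv_le (f := g) (s := Set.univ) (x := 0) (y := y)
    (C := M) (fun x _ => (hg.differentiable (by simp)) x) (fun x _ => hM x) convex_univ
    trivial trivial
  simpa [hz] using this

/-- Pointwise bound of the quotient by the sine. -/
lemma quot_bound {g : ℝ → ℝ} {M : ℝ} (hg : ContDiff ℝ (⊤ : ℕ∞) g) (hz : g 0 = 0)
    (hM : ∀ x, |deriv g x| ≤ M) {y : ℝ} (hy : y ∈ Set.Icc (-π) π) :
    |g y / (2 * π * Real.sin (y / 2))| ≤ M / 2 := by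
  have hpi := Real.pi_pos
  have hM0 : 0 ≤ M := (abs_nonneg _).trans (hM 0)
  have h1 := lin_bound hg hz hM y
  have h2 := sin_half_lower hy
  rw [abs_div, abs_mul, abs_of_pos (by positivity : 0 < 2 * π)]
  apply div_le_of_le_mul₀ (by positivity) (by positivity)
  nlinarith [mul_le_mul_of_nonneg_left h2 hM0]

lemma quot_eq {g : ℝ → ℝ} (hz : g 0 = 0) (p : ℕ) {y : ℝ} (hy : y ∈ Set.Icc (-π) π) :
    g y * dirichletKer p y =
      g y / (2 * π * Real.sin (y / 2)) * Real.sin ((p + 1 / 2 : ℝ) * y) := by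
  by_cases h : y = 0
  · simp [h, hz]
  · have h2 := sin_half_lower hy
    have h3 : Real.sin (y / 2) ≠ 0 := by
      intro h4; rw [h4] at h2; simp at h2; exact h h2
    have hpi := Real.pi_pos.ne'
    rw [← dk_sin]
    field_simp

lemma tendsto_zero {g : ℝ → ℝ} (hg : ContDiff ℝ (⊤ : ℕ∞) g)
    (h0 : ∀ x, x ∉ Set.Ioo (-π) π → g x = 0) (hz : g 0 = 0) :
    Filter.Tendsto (fun p : ℕ => ∫ y in (-π)..π, g y * dirichletKer p y) Filter.atTop
      (nhds 0) := by
  have hpi := Real.pi_pos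
  obtain ⟨M, hM⟩ := bdd_vanish (contDiff_deriv_top hg).continuous (deriv_vanish hg h0)
  set h : ℝ → ℝ := fun y => g y / (2 * π * Real.sin (y / 2)) with hh
  have hmeas : Measurable h := by
    have := hg.continuous.measurable
    fun_prop
  have hint : IntegrableOn h (Set.Ioc (-π) π) := by
    apply Measure.integrableOn_of_bounded (M := M / 2) (by simp)
      hmeas.aestronglyMeasurable
    refine (ae_restrict_iff' measurableSet_Ioc).2 (Filter.Eventually.of_forall fun y hy => ?_)
    exact quot_bound hg hz hM (Set.Ioc_subset_Icc_self hy)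
  set H : ℝ → ℂ := Set.indicator (Set.Ioc (-π) π) (fun y => (h y : ℂ)) with hH
  have hHint : Integrable H := by
    rw [hH, integrable_indicator_iff measurableSet_Ioc]
    exact hint.ofReal
  have hRL := Real.tendsto_integral_exp_smul_cocompact H
  have hw : Filter.Tendsto (fun p : ℕ => -((p : ℝ) + 1 / 2) / (2 * π)) Filter.atTop
      (Filter.cocompact ℝ) := by
    have : Filter.Tendsto (fun p : ℕ => -((p : ℝ) + 1 / 2) / (2 * π)) Filter.atTop
        Filter.atBot := by
      apply Filter.Tendsto.atBot_div_const (by positivity)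
      apply Filter.tendsto_neg_atTop_atBot.comp
      exact Filter.tendsto_atTop_add_const_right _ _ tendsto_natCast_atTop_atTop
    exact this.mono_right atBot_le_cocompact
  have h1 := (Complex.continuous_im.tendsto 0).comp (hRL.comp hw)
  rw [Complex.zero_im] at h1
  refine h1.congr fun p => ?_
  simp only [Function.comp]
  rw [show (∫ v : ℝ, Real.fourierChar (-(v * (-((p : ℝ) + 1 / 2) / (2 * π)))) • H v).im
    = ∫ v : ℝ, (Real.fourierChar (-(v * (-((p : ℝ) + 1 / 2) / (2 * π)))) • H v).im from ?_]
  · rw [intervalIntegral.integral_of_le (by linarith), ← integral_indicator measurableSet_Ioc]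
    congr 1; ext v
    by_cases hv : v ∈ Set.Ioc (-π) π
    · rw [Set.indicator_of_mem hv, hH, Set.indicator_of_mem hv,
        quot_eq hz p (Set.Ioc_subset_Icc_self hv)]
      rw [Circle.smul_def, Real.fourierChar_apply, smul_eq_mul, Complex.im_mul_ofReal,
        Complex.exp_ofReal_mul_I_im, mul_comm]
      congr 2
      field_simp
    · rw [Set.indicator_of_notMem hv, hH, Set.indicator_of_notMem hv]; simp
  · have hi : Integrable (fun v : ℝ =>
        Real.fourierChar (-(v * (-((p : ℝ) + 1 / 2) / (2 * π)))) • H v) := by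
      have := (Real.fourierIntegral_convergent_iff (μ := volume) (f := H)
        (-((p : ℝ) + 1 / 2) / (2 * π))).2 hHint
      refine this.congr (Filter.Eventually.of_forall fun v => ?_)
      simp [mul_comm]
    exact (integral_im hi).symm

lemma change_var (ρ : ℝ → ℝ) (θ : ℝ) (hθ : 0 < θ) (p s : ℕ) :
    (∫ y in (-(π * θ))..(π * θ), y ^ s * specMollifier ρ p θ y) =
      ∫ y in (-π)..π, ((θ * y) ^ s * ρ y) * dirichletKer p y := by
  have h := intervalIntegral.mul_integral_comp_mul_left (a := -π) (b := π)
    (f := fun y => y ^ s * specMollifier ρ p θ y) θ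
  rw [show θ * -π = -(π * θ) by ring, show θ * π = π * θ by ring] at h
  rw [← h, ← intervalIntegral.integral_const_mul]
  congr 1; ext y
  unfold specMollifier
  rw [mul_div_cancel_left₀ _ hθ.ne']
  field_simp

lemma step_bound (n : ℕ) {g : ℝ → ℝ} {M : ℝ} (hg : ContDiff ℝ (⊤ : ℕ∞) g)
    (h0 : ∀ x, x ∉ Set.Ioo (-π) π → g x = 0) (hM : ∀ x, |iteratedDeriv (n + 2) g x| ≤ M)
    (p : ℕ) (hp : 1 ≤ p) (m : ℕ) :
    |(∫ y in (-π)..π, g y * dirichletKer (p + m) y) - ∫ y in (-π)..π, g y * dirichletKer p y| ≤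
      2 * M / p ^ n * (1 / p - 1 / (p + m)) := by
  have hpi := Real.pi_pos
  have hM0 : 0 ≤ M := (abs_nonneg _).trans (hM 0)
  have hp0 : (0 : ℝ) < p := by exact_mod_cast hp
  induction m with
  | zero => simp
  | succ m ih =>
    have e : (∫ y in (-π)..π, g y * dirichletKer (p + (m + 1)) y) =
        (∫ y in (-π)..π, g y * dirichletKer (p + m) y) +
          (1 / π) * ∫ y in (-π)..π, g y * Real.cos (((p : ℝ) + m + 1) * y + 0) := by
      rw [← intervalIntegral.integral_const_mul, ← intervalIntegral.integral_add]
      · congr 1; ext y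
        rw [← add_assoc, dk_succ]; push_cast; rw [add_zero]; ring
      · exact (hg.continuous.mul (dk_cont _)).intervalIntegrable _ _
      · have := hg.continuous
        exact Continuous.intervalIntegrable (by fun_prop) _ _
    have hb := cos_coef_bound (n + 2) ((p : ℝ) + m + 1) (by positivity) g M 0 hg h0 hM
    set J := ∫ y in (-π)..π, g y * Real.cos (((p : ℝ) + m + 1) * y + 0)
    have hJ : |(1 / π) * J| ≤ 2 * M / (p ^ n) * (1 / (p + m) - 1 / (p + m + 1)) := by
      rw [abs_mul, abs_of_pos (by positivity : 0 < 1 / π)]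
      calc 1 / π * |J| ≤ 1 / π * (2 * π * M / ((p : ℝ) + m + 1) ^ (n + 2)) := by gcongr
        _ = 2 * M / (((p : ℝ) + m + 1) ^ n * (((p : ℝ) + m + 1) * ((p : ℝ) + m + 1))) := by
          field_simp; ring
        _ ≤ 2 * M / ((p : ℝ) ^ n * (((p : ℝ) + m) * ((p : ℝ) + m + 1))) := by
          have hm : (0 : ℝ) ≤ m := Nat.cast_nonneg m
          have hA : (p : ℝ) ^ n ≤ ((p : ℝ) + m + 1) ^ n :=
            pow_le_pow_left₀ hp0.le (by linarith) n
          have hB : ((p : ℝ) + m) * ((p : ℝ) + m + 1) ≤ ((p : ℝ) + m + 1) * ((p : ℝ) + m + 1) :=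
            mul_le_mul_of_nonneg_right (by linarith) (by linarith)
          apply div_le_div_of_nonneg_left (by linarith) (by positivity)
          exact mul_le_mul hA hB (by positivity) (by positivity)
        _ = _ := by field_simp; ring
    rw [e]
    push_cast
    calc _ = |((∫ y in (-π)..π, g y * dirichletKer (p + m) y) -
            ∫ y in (-π)..π, g y * dirichletKer p y) + (1 / π) * J| := by congr 1; ring
      _ ≤ _ := abs_add_le _ _
      _ ≤ _ := add_le_add ih hJ
      _ = _ := by rw [← add_assoc (p : ℝ)]; ring

lemma high_bound (n : ℕ) {g : ℝ → ℝ} {M : ℝ} (hg : ContDiff ℝ (⊤ : ℕ∞) g)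
    (h0 : ∀ x, x ∉ Set.Ioo (-π) π → g x = 0) (hz : g 0 = 0)
    (hM : ∀ x, |iteratedDeriv (n + 2) g x| ≤ M) (p : ℕ) (hp : 1 ≤ p) :
    |∫ y in (-π)..π, g y * dirichletKer p y| ≤ 2 * M / p ^ (n + 1) := by
  have hM0 : 0 ≤ M := (abs_nonneg _).trans (hM 0)
  have hp0 : (0 : ℝ) < p := by exact_mod_cast hp
  have ht := (tendsto_zero hg h0 hz).comp (Filter.tendsto_add_atTop_nat p)
  have ht2 := (ht.sub_const (∫ y in (-π)..π, g y * dirichletKer p y)).abs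
  rw [zero_sub, abs_neg] at ht2
  refine le_of_tendsto ht2 (Filter.Eventually.of_forall fun m => ?_)
  simp only [Function.comp]
  rw [add_comm m p]
  refine (step_bound n hg h0 hM p hp m).trans ?_
  rw [show 2 * M / (p : ℝ) ^ (n + 1) = 2 * M / p ^ n * (1 / p) by rw [pow_succ]; field_simp]
  apply mul_le_mul_of_nonneg_left _ (by positivity)
  have : (0 : ℝ) ≤ 1 / (p + m) := by positivity
  linarith

/-- For a `C_0^∞(-π,π)` localizer `ρ` with `ρ(0) = 1`, the moments of the
spectral mollifier `ψ_{p,θ}` satisfy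
`∫_{-πθ}^{πθ} y^s ψ_{p,θ}(y) dy = δ_{s0} + O(C_s · p^{-(s-1)})`,
with `C_s = Const · ‖(θy)^s ρ(y)‖_{C^s}`. -/
theorem moments_of_spectral_mollifier :
    ∀ s : ℕ, ∃ Const : ℝ, 0 < Const ∧
      ∀ (ρ : ℝ → ℝ) (θ : ℝ) (p : ℕ),
        ContDiff ℝ (⊤ : ℕ∞) ρ →
        (∀ x, x ∉ Set.Ioo (-π) π → ρ x = 0) →
        ρ 0 = 1 → 0 < θ → 1 ≤ p →
        |(∫ y in (-(π * θ))..(π * θ), y ^ s * specMollifier ρ p θ y) -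
            (if s = 0 then 1 else 0)| ≤
          Const * CsNorm s (fun y => (θ * y) ^ s * ρ y) * (p : ℝ) ^ ((1 : ℝ) - s) := by
  intro s
  have hpi := Real.pi_pos
  refine ⟨4, by norm_num, ?_⟩
  intro ρ θ p hρ h0 h1 hθ hp
  have hp1 : (1 : ℝ) ≤ p := by exact_mod_cast hp
  have hp0 : (0 : ℝ) < p := by linarith
  rw [change_var ρ θ hθ p s]
  set g : ℝ → ℝ := fun y => (θ * y) ^ s * ρ y with hgdef
  have hg : ContDiff ℝ (⊤ : ℕ∞) g := by
    rw [hgdef]; fun_prop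
  have hg0 : ∀ x, x ∉ Set.Ioo (-π) π → g x = 0 := by
    intro x hx; simp [hgdef, h0 x hx]
  have hM := le_CsNorm s hg hg0
  set M := CsNorm s g
  have hM0 : 0 ≤ M := (abs_nonneg _).trans (hM 0)
  have hlen : |π - -π| = 2 * π := by rw [abs_of_pos] <;> linarith
  change |(∫ y in (-π)..π, g y * dirichletKer p y) - _| ≤ _
  match s, hM, hgdef with
  | 0, hM, hgdef =>
    simp only [iteratedDeriv_zero] at hM
    have hM1 : 1 ≤ M := by
      have := hM 0
      simpa [hgdef, h1] using this
    have hI := intervalIntegral.norm_integral_le_of_norm_le_const (a := -π) (b := π)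
      (C := M * ((2 * p + 1) / (2 * π))) (f := fun y => g y * dirichletKer p y) (by
        intro x _
        rw [norm_mul]
        exact mul_le_mul (hM x) (dk_abs p x) (norm_nonneg _) hM0)
    rw [hlen, Real.norm_eq_abs] at hI
    have e : M * ((2 * p + 1) / (2 * π)) * (2 * π) = M * (2 * p + 1) := by field_simp
    rw [e] at hI
    have h3 := abs_sub (∫ y in (-π)..π, g y * dirichletKer p y) 1
    simp only [if_true, Nat.cast_zero, sub_zero, Real.rpow_one]
    rw [abs_one] at h3
    nlinarith [mul_le_mul hM1 hp1 zero_le_one hM0]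
  | 1, hM, hgdef =>
    simp only [iteratedDeriv_one] at hM
    have hz : g 0 = 0 := by simp [hgdef]
    have hI := intervalIntegral.norm_integral_le_of_norm_le_const (a := -π) (b := π)
      (C := M / 2) (f := fun y => g y * dirichletKer p y) (by
        intro x hx
        rw [Set.uIoc_of_le (by linarith)] at hx
        have hx' := Set.Ioc_subset_Icc_self hx
        rw [quot_eq hz p hx', norm_mul]
        have a := quot_bound hg hz hM hx'
        have b := Real.abs_sin_le_one ((p + 1 / 2 : ℝ) * x)
        exact (mul_le_of_le_one_right (norm_nonneg _) b).trans a)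
    rw [hlen, Real.norm_eq_abs] at hI
    simp only [one_ne_zero, if_false, sub_zero, Nat.cast_one, sub_self, Real.rpow_zero, mul_one]
    nlinarith [Real.pi_le_four]
  | n + 2, hM, hgdef =>
    have hz : g 0 = 0 := by simp [hgdef]
    have hb := high_bound n hg hg0 hz hM p hp
    rw [if_neg (by omega), sub_zero]
    have e : (p : ℝ) ^ ((1 : ℝ) - ((n + 2 : ℕ) : ℝ)) = 1 / p ^ (n + 1) := by
      rw [show (1 : ℝ) - ((n + 2 : ℕ) : ℝ) = -((n + 1 : ℕ) : ℝ) by push_cast; ring,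
        Real.rpow_neg hp0.le, Real.rpow_natCast, one_div]
    rw [e]
    refine hb.trans ?_
    rw [mul_one_div]
    gcongr
    norm_num
end
end

section
/- Let α ≥ 1 and let ρ be a 2π-periodic function in the Gevrey class G_α, i.e. there exist η > 0 and M with sup_x |ρ^{(s)}(x)| ≤ M (s!)^α / η^s for all s ≥ 1. Then there is a constant Const (depending on M, η, α) such that the Fourier projection of ρ satisfies the fractional-exponential accuracy bound |S_N ρ(x) - ρ(x)| ≤ Const · N · e^{-α(ηN)^{1/α}} for all x and all N ≥ 1. -/
open MeasureTheory Real

noncomputable section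

lemma gev_num (t t0 : ℝ) (h0 : 0 < t0) (ht : t0 ≤ t) :
    ((⌈t⌉₊).factorial : ℝ) / t ^ ⌈t⌉₊ ≤
      (exp 1 * exp (1 + 1 / t0) * √(1 + 1 / t0)) * √t * exp (-t) := by
  have htp : 0 < t := lt_of_lt_of_le h0 ht
  set s := ⌈t⌉₊ with hs
  have hs1 : 1 ≤ s := Nat.one_le_ceil_iff.mpr htp
  have hsp : (0 : ℝ) < s := by exact_mod_cast hs1
  have hst : t ≤ s := Nat.le_ceil t
  have hst2 : (s : ℝ) ≤ t + 1 := (Nat.ceil_lt_add_one htp.le).le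
  have hti : 1 / t ≤ 1 / t0 := one_div_le_one_div_of_le h0 ht
  -- Stirling
  have h1 : (s.factorial : ℝ) ≤ exp 1 * √s * (s / exp 1) ^ s := by
    have := Stirling.stirlingSeq'_antitone (Nat.zero_le (s - 1))
    simp only [Function.comp, Nat.succ_eq_add_one, Nat.sub_add_cancel hs1, zero_add,
      Stirling.stirlingSeq_one] at this
    rw [Stirling.stirlingSeq, div_le_iff₀ (by positivity)] at this
    refine this.trans (le_of_eq ?_)
    rw [Real.sqrt_mul (by norm_num)]
    have : √2 ≠ 0 := by positivity
    field_simp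
  have h2 : ((s : ℝ) / t) ^ s ≤ exp (1 + 1 / t0) := by
    have h3 : (s : ℝ) / t ≤ exp (1 / t) := by
      refine le_trans ?_ (Real.add_one_le_exp _)
      rw [div_le_iff₀ htp]
      field_simp
      linarith
    calc ((s : ℝ) / t) ^ s ≤ exp (1 / t) ^ s := by gcongr
      _ = exp (s * (1 / t)) := (Real.exp_nat_mul _ _).symm
      _ ≤ exp (1 + 1 / t0) := by
        gcongr
        calc (s : ℝ) * (1 / t) ≤ (t + 1) * (1 / t) := by gcongr
          _ = 1 + 1 / t := by field_simp
          _ ≤ _ := by gcongr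
  have h4 : √(s : ℝ) ≤ √(1 + 1 / t0) * √t := by
    rw [← Real.sqrt_mul (by positivity)]
    apply Real.sqrt_le_sqrt
    have : 1 ≤ 1 / t0 * t := by rw [one_div, inv_mul_eq_div, le_div_iff₀ h0]; linarith
    linarith
  have h5 : exp (-(s : ℝ)) ≤ exp (-t) := by gcongr
  calc (s.factorial : ℝ) / t ^ s ≤ (exp 1 * √s * (s / exp 1) ^ s) / t ^ s := by gcongr
    _ = exp 1 * √s * ((s : ℝ) / t) ^ s * exp (-(s : ℝ)) := by
      have : exp (-(s : ℝ)) = 1 / exp 1 ^ s := by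
        rw [Real.exp_neg, ← Real.exp_nat_mul, mul_one, one_div]
      rw [this, div_pow, div_pow]
      field_simp
    _ ≤ exp 1 * (√(1 + 1 / t0) * √t) * exp (1 + 1 / t0) * exp (-t) := by gcongr
    _ = _ := by ring

lemma coef_deriv (f : ℝ → ℝ) (hf : ContDiff ℝ 1 f) (hp : Function.Periodic f (2 * π)) (k : ℤ) :
    fourierCoefOn (fun y => ((deriv f y : ℝ) : ℂ)) k
      = (Complex.I * k) * fourierCoefOn (fun y => ((f y : ℝ) : ℂ)) k := by
  unfold fourierCoefOn
  have hd : ∀ x, HasDerivAt (fun y => ((f y : ℝ) : ℂ)) ((deriv f x : ℝ) : ℂ) x := fun x =>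
    ((hf.differentiable (by norm_num)) x).hasDerivAt.ofReal_comp
  have he : ∀ x : ℝ, HasDerivAt (fun y : ℝ => Complex.exp (-(Complex.I * k * y)))
      (Complex.exp (-(Complex.I * k * x)) * (-(Complex.I * k))) x := fun x => by
    have h1 : HasDerivAt (fun y : ℂ => -(Complex.I * k * y)) (-(Complex.I * k)) (x : ℂ) := by
      have h0 := ((hasDerivAt_id (x : ℂ)).const_mul (Complex.I * k)).neg
      rw [mul_one] at h0
      exact h0
    exact (h1.cexp).comp_ofReal
  have hc : Continuous (deriv f) := hf.continuous_deriv (by norm_num)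
  have := intervalIntegral.integral_mul_deriv_eq_deriv_mul (a := -π) (b := π)
    (fun x _ => hd x) (fun x _ => he x)
    ((Complex.continuous_ofReal.comp hc).intervalIntegrable _ _)
    ((by fun_prop : Continuous (fun x : ℝ =>
      Complex.exp (-(Complex.I * k * x)) * (-(Complex.I * k)))).intervalIntegrable _ _)
  have hper : f π = f (-π) := by
    have := hp (-π); rw [← this]; congr 1; ring
  have hexp : Complex.exp (-(Complex.I * k * (π : ℝ)))
      = Complex.exp (-(Complex.I * k * ((-π : ℝ) : ℂ))) := by
    rw [Complex.exp_eq_exp_iff_exists_int]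
    refine ⟨-k, ?_⟩
    push_cast; ring
  rw [hper, hexp, sub_self, zero_sub] at this
  have h2 : ∫ y in (-π)..π, ((f y : ℝ) : ℂ) * (Complex.exp (-(Complex.I * k * y)) * (-(Complex.I * k)))
      = -(Complex.I * k) * ∫ y in (-π)..π, ((f y : ℝ) : ℂ) * Complex.exp (-(Complex.I * k * y)) := by
    rw [← intervalIntegral.integral_const_mul]
    congr 1; ext y; ring
  rw [h2] at this
  linear_combination (1 / (2 * (π : ℂ))) * this

lemma coef_iter (ρ : ℝ → ℝ) (hper : Function.Periodic ρ (2 * π))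
    (hρ : ContDiff ℝ (⊤ : ℕ∞) ρ) (s : ℕ) (k : ℤ) :
    fourierCoefOn (fun y => ((iteratedDeriv s ρ y : ℝ) : ℂ)) k
      = (Complex.I * k) ^ s * fourierCoefOn (fun y => ((ρ y : ℝ) : ℂ)) k := by
  induction s with
  | zero => simp
  | succ s ih =>
    rw [iteratedDeriv_succ, coef_deriv, ih]
    · ring
    · rw [iteratedDeriv_eq_iterate]
      exact ContDiff.iterate_deriv' 1 s (hρ.of_le (by exact_mod_cast le_top))
    · intro x
      have := congrFun (iteratedDeriv_comp_add_const s ρ (2 * π)) x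
      rw [← this]
      congr 1
      ext z; exact hper z

lemma coef_eq (f : ℝ → ℂ) (k : ℤ) :
    fourierCoefOn f k = fourierCoeffOn (neg_lt_self pi_pos) f k := by
  rw [fourierCoeffOn_eq_integral, fourierCoefOn]
  rw [Complex.real_smul]
  congr 1
  · push_cast; ring
  · congr 1; ext y
    rw [fourier_coe_apply, smul_eq_mul, mul_comm]
    congr 2
    push_cast
    have : (π : ℂ) ≠ 0 := by exact_mod_cast pi_ne_zero
    field_simp
    ring

lemma bessel (g : ℝ → ℝ) (hg : Continuous g) (B : ℝ) (hB : ∀ x, |g x| ≤ B) (F : Finset ℤ) :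
    ∑ k ∈ F, ‖fourierCoefOn (fun y => ((g y : ℝ) : ℂ)) k‖ ^ 2 ≤ B ^ 2 := by
  have hL : MemLp (fun y => ((g y : ℝ) : ℂ)) 2 (volume.restrict (Set.Ioc (-π) π)) := by
    refine MemLp.of_bound (C := B) ?_ ?_
    · exact (Complex.continuous_ofReal.comp hg).aestronglyMeasurable
    · exact Filter.Eventually.of_forall fun x => by simpa using hB x
  have h := hasSum_sq_fourierCoeffOn (neg_lt_self pi_pos) hL
  simp_rw [coef_eq]
  refine (sum_le_hasSum F (fun _ _ => by positivity) h).trans ?_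
  have h2 : ∫ x in (-π)..π, ‖((g x : ℝ) : ℂ)‖ ^ 2 ≤ ∫ x in (-π)..π, B ^ 2 := by
    apply intervalIntegral.integral_mono_on (by linarith [pi_pos])
    · exact (by fun_prop : Continuous _).intervalIntegrable _ _
    · exact (by fun_prop : Continuous _).intervalIntegrable _ _
    · intro x _
      have := hB x
      simp only [Complex.norm_real, Real.norm_eq_abs]
      gcongr
  rw [intervalIntegral.integral_const] at h2
  have hp : 0 < π - -π := by linarith [pi_pos]
  rw [smul_eq_mul] at h2 ⊢
  rwa [inv_mul_le_iff₀ hp]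

lemma tail_sq (N : ℕ) (hN : 1 ≤ N) (K : ℕ) (hK : N ≤ K) :
    ∑ k ∈ Finset.Icc (-(K : ℤ)) K \ Finset.Icc (-(N : ℤ)) N, ((k : ℝ) ^ 2)⁻¹ ≤ 2 / N := by
  have hsub : Finset.Icc (-(K : ℤ)) K \ Finset.Icc (-(N : ℤ)) N =
      (Finset.Ioc N K).image (fun n : ℕ => (n : ℤ)) ∪
      (Finset.Ioc N K).image (fun n : ℕ => -(n : ℤ)) := by
    ext k
    simp only [Finset.mem_sdiff, Finset.mem_Icc, Finset.mem_union, Finset.mem_image,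
      Finset.mem_Ioc]
    constructor
    · intro h
      rcases le_total 0 k with hk | hk
      · left; exact ⟨k.toNat, by omega, by omega⟩
      · right; exact ⟨(-k).toNat, by omega, by omega⟩
    · rintro (⟨n, hn, rfl⟩ | ⟨n, hn, rfl⟩) <;> omega
  have h := sum_Ioc_inv_sq_le_sub (α := ℝ) (show N ≠ 0 by omega) hK
  have hK0 : (0 : ℝ) ≤ (K : ℝ)⁻¹ := by positivity
  rw [hsub, Finset.sum_union, Finset.sum_image, Finset.sum_image]
  · push_cast
    simp only [neg_sq]
    rw [div_eq_mul_inv]; linarith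
  · intro a _ b _ h; simpa using h
  · intro a _ b _ h; simpa using h
  · rw [Finset.disjoint_left]
    intro k
    simp only [Finset.mem_image, Finset.mem_Ioc]
    rintro ⟨n, hn, rfl⟩ ⟨m, hm, h⟩
    omega

lemma fourier_hasSum (ρ : ℝ → ℝ) (hper : Function.Periodic ρ (2 * π))
    (hρ : ContDiff ℝ (⊤ : ℕ∞) ρ) (B : ℝ) (hB : ∀ x, |iteratedDeriv 2 ρ x| ≤ B) (x : ℝ) :
    HasSum (fun k : ℤ => fourierCoefOn (fun y => ((ρ y : ℝ) : ℂ)) k * Complex.exp (Complex.I * k * x))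
      ((ρ x : ℝ) : ℂ) := by
  have : Fact (0 < 2 * π) := ⟨by positivity⟩
  have hper' : Function.Periodic (fun y => ((ρ y : ℝ) : ℂ)) (2 * π) := fun y => by
    simp [hper y]
  let F : C(AddCircle (2 * π), ℂ) := ⟨hper'.lift, by
    apply Continuous.quotient_lift
    exact Complex.continuous_ofReal.comp hρ.continuous⟩
  have hF : ∀ y : ℝ, F (y : AddCircle (2 * π)) = ((ρ y : ℝ) : ℂ) := fun y => hper'.lift_coe y
  have hco : ∀ k, fourierCoeff F k = fourierCoefOn (fun y => ((ρ y : ℝ) : ℂ)) k := by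
    intro k
    rw [fourierCoeff_eq_intervalIntegral _ _ (-π), fourierCoefOn, Complex.real_smul]
    rw [show -π + 2 * π = π by ring]
    congr 1
    · push_cast; ring
    · congr 1; ext y
      rw [fourier_coe_apply, smul_eq_mul, mul_comm, hF]
      congr 2
      push_cast
      have : (π : ℂ) ≠ 0 := by exact_mod_cast pi_ne_zero
      field_simp
  have hB0 : 0 ≤ B := (abs_nonneg _).trans (hB 0)
  have hsum : Summable (fourierCoeff F) := by
    have hs : Summable (fun k : ℤ => B * (1 / (k : ℝ) ^ 2)) :=
      (Real.summable_one_div_int_pow.mpr (by norm_num)).mul_left B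
    refine Summable.of_norm_bounded_eventually hs ?_
    rw [Filter.eventually_cofinite]
    refine (Set.finite_singleton (0 : ℤ)).subset ?_
    intro k hk
    by_contra hk0
    apply hk
    have hk0 : (k : ℝ) ≠ 0 := by simpa using hk0
    have hb := bessel (iteratedDeriv 2 ρ) (hρ.continuous_iteratedDeriv 2 (WithTop.coe_le_coe.mpr (le_top : ((2 : ℕ) : ℕ∞) ≤ ⊤)))
      B hB {k}
    rw [Finset.sum_singleton, coef_iter ρ hper hρ] at hb
    have hb := (abs_le_of_sq_le_sq' hb hB0).2
    rw [hco]
    simp only [norm_mul, norm_pow, Complex.norm_I, one_mul, Complex.norm_intCast, sq_abs] at hb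
    rw [mul_one_div, le_div_iff₀ (by positivity)]
    linarith
  have := has_pointwise_sum_fourier_series_of_summable hsum (x : AddCircle (2 * π))
  rw [hF] at this
  convert this using 2 with k
  rw [hco, smul_eq_mul, fourier_coe_apply]
  congr 2
  push_cast
  have : (π : ℂ) ≠ 0 := by exact_mod_cast pi_ne_zero
  field_simp

lemma spectral (ρ : ℝ → ℝ) (hper : Function.Periodic ρ (2 * π))
    (hρ : ContDiff ℝ (⊤ : ℕ∞) ρ) (B2 : ℝ) (hB2 : ∀ x, |iteratedDeriv 2 ρ x| ≤ B2)
    (s : ℕ) (hs : 1 ≤ s) (B : ℝ) (hB : ∀ x, |iteratedDeriv s ρ x| ≤ B)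
    (N : ℕ) (hN : 1 ≤ N) (x : ℝ) :
    ‖SN N (fun y => ((ρ y : ℝ) : ℂ)) x - ((ρ x : ℝ) : ℂ)‖ ≤ 2 * √N * (B / N ^ s) := by
  have hB0 : 0 ≤ B := (abs_nonneg _).trans (hB 0)
  have hNp : (0 : ℝ) < N := by exact_mod_cast hN
  have h := (fourier_hasSum ρ hper hρ B2 hB2 x)
  have h := h.comp (Finset.tendsto_Icc_neg (R := ℤ))
  have h := (tendsto_const_nhds (x := SN N (fun y => ((ρ y : ℝ) : ℂ)) x)).sub h |>.norm
  refine le_of_tendsto h ?_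
  filter_upwards [Filter.eventually_ge_atTop N] with K hK
  have hss : Finset.Icc (-(N : ℤ)) N ⊆ Finset.Icc (-(K : ℤ)) K :=
    Finset.Icc_subset_Icc (by omega) (by omega)
  simp only [Function.comp]
  rw [SN, ← Finset.sum_sdiff hss, sub_add_cancel_right, norm_neg]
  set F := Finset.Icc (-(K : ℤ)) K \ Finset.Icc (-(N : ℤ)) N with hF
  set c := fourierCoefOn (fun y => ((ρ y : ℝ) : ℂ)) with hc
  have hmem : ∀ k ∈ F, (N : ℝ) ≤ |(k : ℝ)| := by
    intro k hk
    rw [hF, Finset.mem_sdiff, Finset.mem_Icc, Finset.mem_Icc] at hk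
    have : (N : ℤ) ≤ |k| := by
      rw [le_abs]; omega
    exact_mod_cast this
  refine (norm_sum_le _ _).trans ?_
  have hn : ∀ k ∈ F, ‖c k * Complex.exp (Complex.I * k * x)‖
      = (|(k : ℝ)| ^ s)⁻¹ * ‖fourierCoefOn (fun y => ((iteratedDeriv s ρ y : ℝ) : ℂ)) k‖ := by
    intro k hk
    have hk0 : 0 < |(k : ℝ)| := hNp.trans_le (hmem k hk)
    rw [coef_iter ρ hper hρ, norm_mul, norm_mul, norm_pow, norm_mul, Complex.norm_I, one_mul,
      Complex.norm_intCast, inv_mul_cancel_left₀ (by positivity)]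
    have : Complex.exp (Complex.I * k * x) = Complex.exp (((k * x : ℝ) : ℂ) * Complex.I) := by
      congr 1; push_cast; ring
    rw [this, Complex.norm_exp_ofReal_mul_I, mul_one]
  rw [Finset.sum_congr rfl hn]
  apply le_of_sq_le_sq _ (by positivity)
  refine (Finset.sum_mul_sq_le_sq_mul_sq _ _ _).trans ?_
  have hb := bessel (iteratedDeriv s ρ)
    (hρ.continuous_iteratedDeriv s (by exact_mod_cast le_top)) B hB F
  have ht : ∑ k ∈ F, ((|(k : ℝ)| ^ s)⁻¹) ^ 2 ≤ 4 * N * (1 / N ^ s) ^ 2 := by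
    obtain ⟨r, rfl⟩ : ∃ r, s = r + 1 := ⟨s - 1, by omega⟩
    calc ∑ k ∈ F, ((|(k : ℝ)| ^ (r + 1))⁻¹) ^ 2
        ≤ ∑ k ∈ F, ((N : ℝ) ^ r)⁻¹ ^ 2 * ((k : ℝ) ^ 2)⁻¹ := by
          apply Finset.sum_le_sum
          intro k hk
          have := hmem k hk
          have hk0 : 0 < |(k : ℝ)| := hNp.trans_le this
          have hkp : 0 < (N : ℝ) ^ r * |(k : ℝ)| := mul_pos (pow_pos hNp r) hk0
          rw [← sq_abs (k : ℝ), ← inv_pow (|(k : ℝ)|) 2, ← mul_pow, ← mul_inv, pow_succ |(k : ℝ)| r]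
          gcongr
      _ = ((N : ℝ) ^ r)⁻¹ ^ 2 * ∑ k ∈ F, ((k : ℝ) ^ 2)⁻¹ := by rw [Finset.mul_sum]
      _ ≤ ((N : ℝ) ^ r)⁻¹ ^ 2 * (2 / N) := by gcongr; exact tail_sq N hN K hK
      _ ≤ ((N : ℝ) ^ r)⁻¹ ^ 2 * (4 / N) := by gcongr; norm_num
      _ = _ := by rw [pow_succ (N : ℝ) r]; field_simp
  calc _ ≤ (4 * N * (1 / N ^ s) ^ 2) * B ^ 2 := by gcongr
    _ = _ := by
      rw [mul_pow, mul_pow, Real.sq_sqrt hNp.le]; ring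

/-- Fractional-exponential accuracy of the Fourier projection of a
2π-periodic Gevrey-`α` function:
`|S_N ρ(x) - ρ(x)| ≤ Const · N · e^{-α(ηN)^{1/α}}`. -/
theorem fourier_projection_gevrey_decay
    (α : ℝ) (hα : 1 ≤ α) (ρ : ℝ → ℝ) (η M : ℝ)
    (hper : Function.Periodic ρ (2 * π))
    (hρ : ContDiff ℝ (⊤ : ℕ∞) ρ)
    (hη : 0 < η) (hM : 0 < M)
    (hgev : ∀ s : ℕ, 1 ≤ s → ∀ x : ℝ,
      |iteratedDeriv s ρ x| ≤ M * (Nat.factorial s : ℝ) ^ α / η ^ s) :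
    ∃ Const : ℝ, 0 < Const ∧
      ∀ (N : ℕ), 1 ≤ N → ∀ x : ℝ,
        ‖SN N (fun y => ((ρ y : ℝ) : ℂ)) x - ((ρ x : ℝ) : ℂ)‖ ≤
          Const * N * Real.exp (-α * (η * N) ^ (1 / α)) := by
  have hα0 : 0 < α := by linarith
  set t0 := η ^ (1 / α) with ht0
  have ht0p : 0 < t0 := by positivity
  set A := exp 1 * exp (1 + 1 / t0) * √(1 + 1 / t0) with hA
  have hAp : 0 < A := by positivity
  refine ⟨2 * M * A ^ α * √η, by positivity, ?_⟩
  intro N hN x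
  have hN1 : (1 : ℝ) ≤ N := by exact_mod_cast hN
  have hNp : (0 : ℝ) < N := by linarith
  set t := (η * N) ^ (1 / α) with ht
  have htp : 0 < t := by positivity
  have htt : t0 ≤ t := by
    apply Real.rpow_le_rpow hη.le _ (by positivity)
    nlinarith
  have hta : t ^ α = η * N := by
    rw [ht, ← Real.rpow_mul (by positivity), one_div_mul_cancel hα0.ne', Real.rpow_one]
  have hnum := gev_num t t0 ht0p htt
  rw [← hA] at hnum
  set s := ⌈t⌉₊ with hs
  have hs1 : 1 ≤ s := Nat.one_le_ceil_iff.mpr htp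
  refine (spectral ρ hper hρ _ (hgev 2 (by norm_num)) s hs1 _ (hgev s hs1) N hN x).trans ?_
  have e1 : M * (s.factorial : ℝ) ^ α / η ^ s / N ^ s = M * ((s.factorial : ℝ) / t ^ s) ^ α := by
    rw [Real.div_rpow (by positivity) (by positivity), ← Real.rpow_natCast t s,
      ← Real.rpow_mul htp.le, mul_comm (s : ℝ) α, Real.rpow_mul htp.le, hta, Real.rpow_natCast,
      mul_pow]
    field_simp
  have e2 : (A * √t * exp (-t)) ^ α = A ^ α * (√η * √N) * exp (-α * t) := by
    rw [Real.mul_rpow (by positivity) (by positivity), Real.mul_rpow (by positivity) (by positivity),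
      ← Real.sqrt_mul hη.le, ← hta, ← Real.exp_mul, Real.sqrt_eq_rpow, Real.sqrt_eq_rpow,
      ← Real.rpow_mul htp.le, ← Real.rpow_mul htp.le, mul_comm α (1 / 2), neg_mul, neg_mul,
      mul_comm t α]
  rw [e1]
  calc 2 * √(N : ℝ) * (M * ((s.factorial : ℝ) / t ^ s) ^ α)
      ≤ 2 * √(N : ℝ) * (M * (A * √t * exp (-t)) ^ α) := by gcongr
    _ = 2 * M * A ^ α * √η * (√(N : ℝ) * √(N : ℝ)) * exp (-α * t) := by rw [e2]; ring
    _ = _ := by rw [Real.mul_self_sqrt hNp.le]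
end
end
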